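/- An element w of a Coxeter group W is fully commutative if and only if no reduced word of w contains a contiguous subword sts⋯ of length m(s,t) for generators s,t with m(s,t) ≥ 3. -/

import Mathlib

open CoxeterSystem

/-- Two words differ by a single commutation move: swapping two adjacent commuting letters. -/
def CommStep {B : Type*} (M : CoxeterMatrix B) (l l' : List B) : Prop :=
  ∃ (u v : List B) (a b : B), M a b = 2 ∧ l = u ++ a :: b :: v ∧ l' = u ++ b :: a :: v

/-- Two words are related by a sequence of commutation moves. -/
def CommEquiv {B : Type*} (M : CoxeterMatrix B) : List B → List B → Prop :=
  Relation.ReflTransGen fun l l' => CommStep M l l' ∨ CommStep M l' l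

/-- An element is fully commutative if any two of its reduced words are related by
commutation moves alone. -/
def FullyCommutative {B W : Type*} [Group W] {M : CoxeterMatrix B}
    (cs : CoxeterSystem M W) (w : W) : Prop :=
  ∀ l l', cs.IsReduced l → cs.wordProd l = w → cs.IsReduced l' → cs.wordProd l' = w →
    CommEquiv M l l'

/-!
If a reduced word of `w` contains a braid word in `s` and `t` with `m(s,t) ≥ 3`, replacing it by its
mirror image gives another reduced word of `w`; commutation moves cannot relate the two, since they
preserve the subsequence of letters equal to `s` or `t`.

Conversely, induct on the length of `w`. Two reduced words ending in the same letter `s` are related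
by induction applied to `w s`. If they end in `s ≠ t`, then both are right descents of `w`, and the
exchange property produces reduced words of `w` ending in alternating words in `s` and `t` of every
length up to `m(s,t)`, hence `m(s,t) = 2`. So `w` has reduced words `ω s t` and `ω t s`, which link
the two given ones.

The exchange property comes from the action of `W` on pairs of an element `r` and a sign, in which
a word flips the sign once for each occurrence of `r` in its right inversion sequence. It is
also needed that `s t` has order exactly `m(s,t)`: in the geometric representation the powers of
`s t` are given by Chebyshev polynomials evaluated at `2 cos (π / m(s,t))`.
-/

section ReflectionPairs

open Polynomial.Chebyshev

theorem reflection_mul_reflection_pow_apply_eq_S {R V : Type*} [CommRing R] [AddCommGroup V]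
    [Module R V] {x y : V} {f g : Module.Dual R V} (hf : f x = 2) (hg : g y = 2) {t : R}
    (hfy : f y = -t) (hgx : g x = -t) (k : ℕ) :
    ((Module.reflection hf * Module.reflection hg) ^ k) x =
      (S R (2 * k)).eval t • x + (S R (2 * k - 1)).eval t • y := by
  induction k with
  | zero => simp
  | succ k ih =>
    have hodd : (S R (2 * k + 1)).eval t =
        t * (S R (2 * k)).eval t - (S R (2 * k - 1)).eval t := by
      simp [S_add_one R (2 * k)]
    have heven : (S R (2 * k + 2)).eval t =
        t * (S R (2 * k + 1)).eval t - (S R (2 * k)).eval t := by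
      simp [S_add_two]
    rw [pow_succ', LinearEquiv.mul_apply, ih, Nat.cast_succ, mul_add_one,
      show (2 * k + 2 - 1 : ℤ) = 2 * k + 1 by ring, heven, hodd]
    simp only [LinearEquiv.mul_apply, Module.reflection_apply, map_add, map_sub, map_smul, hf, hg,
      hfy, hgx]
    module

/-- As `f y * g x ≠ 4`, every vector is the sum of a combination of `x` and `y` and of a vector
killed by `f` and `g`. -/
theorem reflection_mul_reflection_pow_eq_one {K V : Type*} [Field K] [AddCommGroup V] [Module K V]
    {x y : V} {f g : Module.Dual K V} (hf : f x = 2) (hg : g y = 2) (hfg : f y * g x ≠ 4) {n : ℕ}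
    (hx : ((Module.reflection hf * Module.reflection hg) ^ n) x = x)
    (hy : ((Module.reflection hf * Module.reflection hg) ^ n) y = y) :
    (Module.reflection hf * Module.reflection hg) ^ n = 1 := by
  ext1 z
  set c := (4 - f y * g x)⁻¹
  set p := (c * (2 * f z - f y * g z)) • x + (c * (2 * g z - g x * f z)) • y
  have hc : c * (4 - f y * g x) = 1 := inv_mul_cancel₀ (sub_ne_zero.2 hfg.symm)
  have hfp : f (z - p) = 0 := by
    simp only [p, map_sub, map_add, map_smul, hf, smul_eq_mul]
    linear_combination -f z * hc
  have hgp : g (z - p) = 0 := by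
    simp only [p, map_sub, map_add, map_smul, hg, smul_eq_mul]
    linear_combination -g z * hc
  have hfix : ((Module.reflection hf * Module.reflection hg) ^ n) (z - p) = z - p := by
    rw [LinearEquiv.pow_apply]
    apply Function.iterate_fixed
    rw [LinearEquiv.mul_apply]
    simp only [Module.reflection_apply, hfp, hgp, zero_smul, sub_zero]
  have hp : ((Module.reflection hf * Module.reflection hg) ^ n) p = p := by
    simp only [p, map_add, map_smul, hx, hy]
  rw [map_sub, hp, sub_left_inj] at hfix
  exact hfix

theorem sin_pi_div_natCast_pos {m : ℕ} (hm : 2 ≤ m) : 0 < Real.sin (Real.pi / m) := by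
  have hm' : (2 : ℝ) ≤ m := mod_cast hm
  exact Real.sin_pos_of_pos_of_lt_pi (by positivity) (div_lt_self Real.pi_pos (by linarith))

theorem S_two_mul_cos_pi_div_eq_iff_dvd {m : ℕ} (hm : m ≠ 1) (k : ℕ) :
    (S ℝ (2 * k)).eval (2 * Real.cos (Real.pi / m)) = 1 ∧
      (S ℝ (2 * k - 1)).eval (2 * Real.cos (Real.pi / m)) = 0 ↔ m ∣ k := by
  obtain rfl | hm0 := eq_or_ne m 0
  · simp
  have hsin := (sin_pi_div_natCast_pos (m := m) (by lia)).ne'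
  have hmθ : m * (Real.pi / m) = Real.pi := by field_simp
  have hθ0 : Real.pi / m ≠ 0 := by positivity
  generalize Real.pi / m = θ at *
  have heven := S_two_mul_real_cos θ (2 * k)
  have hodd := S_two_mul_real_cos θ (2 * k - 1)
  push_cast at heven hodd
  rw [sub_add_cancel] at hodd
  rw [← mul_left_inj' hsin, ← mul_left_inj' hsin (b := 0), heven, hodd, one_mul, zero_mul]
  trans Real.cos (2 * k * θ) = 1
  · rw [add_mul, Real.sin_add, one_mul]
    constructor
    · rintro ⟨h, h0⟩
      simpa [h0, hsin] using h
    · intro h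
      have h0 : Real.sin (2 * k * θ) = 0 := (Real.sin_eq_zero_iff_cos_eq).2 (.inl h)
      simp [h, h0]
  · rw [Real.cos_eq_one_iff, ← Int.natCast_dvd_natCast]
    refine exists_congr fun n ↦ ?_
    rw [← hmθ, ← Int.cast_inj (α := ℝ)]
    push_cast
    constructor <;> intro h
    · apply mul_right_cancel₀ hθ0
      linear_combination -h / 2
    · linear_combination -2 * θ * h

end ReflectionPairs

section GeometricRepresentation

variable {B : Type*} (M : CoxeterMatrix B)

/-- The linear form `2⟨e i, ·⟩` of the geometric representation: its value at the `j`-th basis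
vector is `-2 cos (π / m(i,j))`, which is `-2` if `m(i,j)` is infinite (encoded as `0`). -/
noncomputable def simpleCoroot (i : B) : Module.Dual ℝ (B →₀ ℝ) :=
  Finsupp.linearCombination ℝ fun j ↦ -(2 * Real.cos (Real.pi / M i j))

@[simp]
theorem simpleCoroot_single (i j : B) :
    simpleCoroot M i (Finsupp.single j 1) = -(2 * Real.cos (Real.pi / M i j)) := by
  simp [simpleCoroot]

theorem simpleCoroot_single_self (i : B) : simpleCoroot M i (Finsupp.single i 1) = 2 := by
  simp

/-- The reflection by which the simple generator `i` acts in the geometric representation. -/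
noncomputable def geometricReflection (i : B) : (B →₀ ℝ) ≃ₗ[ℝ] (B →₀ ℝ) :=
  Module.reflection (simpleCoroot_single_self M i)

theorem geometricReflection_mul_self (i : B) :
    geometricReflection M i * geometricReflection M i = 1 :=
  LinearEquiv.ext (Module.involutive_reflection (simpleCoroot_single_self M i))

variable {M}

theorem geometricReflection_mul_pow_apply_single_eq_iff_dvd {i j : B} (hij : i ≠ j) (k : ℕ) :
    ((geometricReflection M i * geometricReflection M j) ^ k) (Finsupp.single i 1) =
      Finsupp.single i 1 ↔ M i j ∣ k := by
  rw [← S_two_mul_cos_pi_div_eq_iff_dvd (M.off_diagonal i j hij) k, geometricReflection,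
    geometricReflection, reflection_mul_reflection_pow_apply_eq_S _ _ (simpleCoroot_single M i j)
      (by rw [simpleCoroot_single, M.symmetric j i])]
  constructor
  · intro h
    exact ⟨by simpa [hij] using DFunLike.congr_fun h i,
      by simpa [hij] using DFunLike.congr_fun h j⟩
  · rintro ⟨h1, h0⟩
    rw [h1, h0, one_smul, zero_smul, add_zero]

theorem simpleCoroot_mul_simpleCoroot_ne_four {i j : B} (hij : i ≠ j) (h0 : M i j ≠ 0) :
    simpleCoroot M i (Finsupp.single j 1) * simpleCoroot M j (Finsupp.single i 1) ≠ 4 := by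
  rw [simpleCoroot_single, simpleCoroot_single, M.symmetric j i]
  have h1 := M.off_diagonal i j hij
  have hsin := sin_pi_div_natCast_pos (m := M i j) (by lia)
  nlinarith [Real.sin_sq_add_cos_sq (Real.pi / M i j)]

variable (M)

theorem isLiftable_geometricReflection : M.IsLiftable (geometricReflection M) := by
  intro i j
  obtain rfl | hij := eq_or_ne i j
  · rw [geometricReflection_mul_self, one_pow]
  obtain h0 | h0 := eq_or_ne (M i j) 0
  · rw [h0, pow_zero]
  have hinv : (geometricReflection M i * geometricReflection M j)⁻¹ =
      geometricReflection M j * geometricReflection M i := by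
    simp only [mul_inv_rev, inv_eq_of_mul_eq_one_left (geometricReflection_mul_self M _)]
  apply reflection_mul_reflection_pow_eq_one
  · exact simpleCoroot_mul_simpleCoroot_ne_four hij h0
  · exact (geometricReflection_mul_pow_apply_single_eq_iff_dvd hij _).2 dvd_rfl
  · have hj := (geometricReflection_mul_pow_apply_single_eq_iff_dvd hij.symm (M i j)).2
      (M.symmetric j i).dvd
    rw [← hinv, inv_pow] at hj
    exact ((LinearEquiv.symm_apply_eq _).1 hj).symm

end GeometricRepresentation

theorem orderOf_simple_mul_simple {B W : Type*} [Group W] {M : CoxeterMatrix B}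
    (cs : CoxeterSystem M W) (i j : B) : orderOf (cs.simple i * cs.simple j) = M i j := by
  obtain rfl | hij := eq_or_ne i j
  · simp
  refine Nat.dvd_antisymm (orderOf_dvd_of_pow_eq_one (cs.simple_mul_simple_pow i j)) ?_
  calc
    M i j ∣ orderOf (geometricReflection M i * geometricReflection M j) := by
      rw [← geometricReflection_mul_pow_apply_single_eq_iff_dvd hij, pow_orderOf_eq_one,
        LinearEquiv.coe_one, id]
    _ = orderOf (cs.lift ⟨_, isLiftable_geometricReflection M⟩ (cs.simple i * cs.simple j)) := by
      rw [map_mul, cs.lift_apply_simple, cs.lift_apply_simple]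
    _ ∣ orderOf (cs.simple i * cs.simple j) := orderOf_map_dvd _ _

section Exchange

theorem prod_map_alternatingWord_two_mul {B G : Type*} [Monoid G] (f : B → G) (i j : B) (n : ℕ) :
    ((alternatingWord i j (2 * n)).map f).prod = (f i * f j) ^ n := by
  induction n with
  | zero => simp [alternatingWord]
  | succ n ih =>
    rw [mul_add_one, alternatingWord_succ, alternatingWord_succ, pow_succ, ← ih]
    simp

variable {B W : Type*} [Group W] {M : CoxeterMatrix B} (cs : CoxeterSystem M W)

theorem rightInvSeq_alternatingWord (i j : B) (k : ℕ) :
    cs.rightInvSeq (alternatingWord i j k) =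
      ((List.range k).map fun r ↦ (cs.simple j * cs.simple i) ^ r * cs.simple j).reverse := by
  induction k generalizing i j with
  | zero => simp [alternatingWord]
  | succ k ih =>
    have hconj (r : ℕ) :
        MulAut.conj (cs.simple j) ((cs.simple i * cs.simple j) ^ r * cs.simple i) =
          (cs.simple j * cs.simple i) ^ (r + 1) * cs.simple j := by
      rw [mul_pow_mul, MulAut.conj_apply, inv_simple, pow_succ']
      simp only [mul_assoc]
    rw [alternatingWord_succ, rightInvSeq_concat, ih, List.range_succ_eq_map]
    simp [hconj, Function.comp_def]

theorem even_count_rightInvSeq_alternatingWord [DecidableEq W] (i j : B) (t : W) :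
    Even ((cs.rightInvSeq (alternatingWord i j (2 * M i j))).count t) := by
  rw [rightInvSeq_alternatingWord, List.count_reverse, two_mul, List.range_add, List.map_append,
    List.count_append, List.map_map]
  have hperiod : ((fun r ↦ (cs.simple j * cs.simple i) ^ r * cs.simple j) ∘ (M i j + ·)) =
      fun r ↦ (cs.simple j * cs.simple i) ^ r * cs.simple j := by
    funext r
    simp [pow_add]
  rw [hperiod]
  exact Even.add_self _

/-- The action of the simple generator `i` on pairs of a group element and a sign (written
additively): it conjugates the group element by `i`, and flips the sign if that element is the
generator `i` itself. -/
def signedConj [DecidableEq W] (i : B) : Function.End (W × ZMod 2) := fun p ↦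
  (cs.simple i * p.1 * cs.simple i, p.2 + if p.1 = cs.simple i then 1 else 0)

theorem prod_map_signedConj_apply [DecidableEq W] (ω : List B) (t : W) (e : ZMod 2) :
    (ω.map (signedConj cs)).prod (t, e) =
      (cs.wordProd ω * t * (cs.wordProd ω)⁻¹, e + (cs.rightInvSeq ω).count t) := by
  induction ω with
  | nil => simp [Function.End.one_def]
  | cons i ω ih =>
    have hiff : cs.wordProd ω * t * (cs.wordProd ω)⁻¹ = cs.simple i ↔
        (cs.wordProd ω)⁻¹ * cs.simple i * cs.wordProd ω = t := by
      rw [mul_inv_eq_iff_eq_mul, mul_assoc, inv_mul_eq_iff_eq_mul, eq_comm]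
    rw [List.map_cons, List.prod_cons]
    change signedConj cs i ((ω.map (signedConj cs)).prod (t, e)) = _
    rw [ih]
    simp only [signedConj, hiff]
    simp [rightInvSeq, wordProd_cons, List.count_cons, mul_assoc, add_assoc]

theorem isLiftable_signedConj [DecidableEq W] : M.IsLiftable (signedConj cs) := by
  intro i j
  funext ⟨t, e⟩
  have hprod : cs.wordProd (alternatingWord i j (2 * M i j)) = 1 := by
    simp [prod_alternatingWord_eq_mul_pow]
  rw [← prod_map_alternatingWord_two_mul, prod_map_signedConj_apply, hprod,
    (ZMod.natCast_eq_zero_iff_even).2 (even_count_rightInvSeq_alternatingWord cs i j t)]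
  simp [Function.End.one_def]

theorem count_rightInvSeq_modEq_of_wordProd_eq [DecidableEq W] {ω ω' : List B}
    (h : cs.wordProd ω = cs.wordProd ω') (t : W) :
    (cs.rightInvSeq ω).count t ≡ (cs.rightInvSeq ω').count t [MOD 2] := by
  have hlift (ω : List B) : cs.lift ⟨_, isLiftable_signedConj cs⟩ (cs.wordProd ω) =
      (ω.map (signedConj cs)).prod := by
    simp [wordProd, map_list_prod, Function.comp_def]
  have hprod := hlift ω
  rw [h, hlift ω'] at hprod
  have := congr_fun hprod (t, 0)
  rw [prod_map_signedConj_apply, prod_map_signedConj_apply] at this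
  rw [← ZMod.natCast_eq_natCast_iff]
  simpa using (congr_arg Prod.snd this).symm

variable {cs}

theorem isReduced_of_wordProd_eq {ω ω' : List B} (h : cs.IsReduced ω)
    (hprod : cs.wordProd ω' = cs.wordProd ω) (hlen : ω'.length = ω.length) :
    cs.IsReduced ω' := by
  rw [CoxeterSystem.IsReduced, hprod, hlen, h.eq]

theorem isReduced_append_singleton_of_isRightDescent {w : W} {i : B} (h : cs.IsRightDescent w i)
    {ω : List B} (hω : cs.IsReduced ω) (hw : cs.wordProd ω = w * cs.simple i) :
    cs.IsReduced (ω ++ [i]) := by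
  rw [CoxeterSystem.IsReduced, wordProd_append, wordProd_singleton, hw,
    simple_mul_simple_cancel_right, ← cs.isRightDescent_iff.1 h, ← hw, hω.eq,
    List.length_append, List.length_singleton]

theorem isRightDescent_of_isReduced_append_singleton {ω : List B} {i : B}
    (h : cs.IsReduced (ω ++ [i])) : cs.IsRightDescent (cs.wordProd (ω ++ [i])) i := by
  rw [IsRightDescent, h.eq, wordProd_append, wordProd_singleton, simple_mul_simple_cancel_right]
  exact (cs.length_wordProd_le ω).trans_lt (by simp)

theorem simple_mem_rightInvSeq_of_isRightDescent {ω : List B} {i : B}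
    (h : cs.IsRightDescent (cs.wordProd ω) i) : cs.simple i ∈ cs.rightInvSeq ω := by
  classical
  obtain ⟨ω', hω', hprod⟩ := cs.exists_isReduced (cs.wordProd ω * cs.simple i)
  have hred := isReduced_append_singleton_of_isRightDescent h hω' hprod.symm
  have hmem : cs.simple i ∈ cs.rightInvSeq (ω' ++ [i]) := by
    rw [← List.concat_eq_append, rightInvSeq_concat]
    simp
  have hcount := count_rightInvSeq_modEq_of_wordProd_eq cs (ω := ω) (ω' := ω' ++ [i])
    (by simp [wordProd_append, ← hprod]) (cs.simple i)
  rw [List.count_eq_one_of_mem hred.nodup_rightInvSeq hmem] at hcount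
  by_contra hnot
  rw [List.count_eq_zero_of_not_mem hnot] at hcount
  exact absurd hcount (by decide)

theorem exists_wordProd_eraseIdx_append_of_isRightDescent {ω ω' : List B} {i : B}
    (h : cs.IsRightDescent (cs.wordProd (ω ++ ω')) i) (hi : cs.simple i ∉ cs.rightInvSeq ω') :
    ∃ n < ω.length, cs.wordProd (ω.eraseIdx n ++ ω' ++ [i]) = cs.wordProd (ω ++ ω') := by
  obtain ⟨n, hn, hni⟩ := List.mem_iff_getElem.1 (simple_mem_rightInvSeq_of_isRightDescent h)
  have hlt : n < ω.length := by
    by_contra! hle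
    have hdrop := cs.rightInvSeq_drop (ω ++ ω') ω.length
    rw [List.drop_left] at hdrop
    refine hi (hdrop ▸ List.mem_drop_iff_getElem.2 ⟨n - ω.length, by grind, ?_⟩)
    simp [← hni, hle]
  have herase := cs.wordProd_mul_getD_rightInvSeq (ω ++ ω') n
  rw [List.getD_eq_getElem _ _ hn, hni, List.eraseIdx_append_of_lt_length hlt] at herase
  refine ⟨n, hlt, ?_⟩
  rw [wordProd_append, wordProd_singleton, ← herase, simple_mul_simple_cancel_right]

theorem exists_isReduced_append_alternatingWord {w : W} {i j : B}
    (hi : cs.IsRightDescent w i) (hj : cs.IsRightDescent w j) {k : ℕ}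
    (hk : M i j = 0 ∨ k ≤ M i j) :
    ∃ ω, cs.IsReduced (ω ++ alternatingWord i j k) ∧
      cs.wordProd (ω ++ alternatingWord i j k) = w := by
  induction k generalizing i j with
  | zero =>
    obtain ⟨ω, hω, hw⟩ := cs.exists_isReduced w
    exact ⟨ω, by simpa [alternatingWord], by simpa [alternatingWord] using hw.symm⟩
  | succ k ih =>
    obtain ⟨ω, hω, rfl⟩ := ih hj hi (by rw [M.symmetric]; lia)
    have hnot : cs.simple j ∉ cs.rightInvSeq (alternatingWord j i k) := by
      rw [rightInvSeq_alternatingWord, List.mem_reverse, List.mem_map]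
      rintro ⟨r, hr, hrj⟩
      have hpow : (cs.simple i * cs.simple j) ^ (r + 1) = 1 := by
        rw [pow_succ, ← mul_assoc, hrj, simple_mul_simple_self]
      have hdvd := orderOf_dvd_of_pow_eq_one hpow
      rw [orderOf_simple_mul_simple] at hdvd
      rw [List.mem_range] at hr
      obtain hk | hk := hk
      · simp [hk] at hdvd
      · have := Nat.le_of_dvd r.succ_pos hdvd
        lia
    obtain ⟨n, hn, hprod⟩ := exists_wordProd_eraseIdx_append_of_isRightDescent hj hnot
    rw [List.append_assoc, ← List.concat_eq_append (as := alternatingWord j i k),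
      ← alternatingWord_succ] at hprod
    refine ⟨ω.eraseIdx n, isReduced_of_wordProd_eq hω hprod ?_, hprod⟩
    have := List.length_eraseIdx_add_one hn
    simp only [List.length_append, length_alternatingWord]
    lia

end Exchange

theorem wordProd_alternatingWord_comm {B W : Type*} [Group W] {M : CoxeterMatrix B}
    (cs : CoxeterSystem M W) (i j : B) :
    cs.wordProd (alternatingWord i j (M i j)) = cs.wordProd (alternatingWord j i (M i j)) := by
  have := cs.wordProd_braidWord_eq i j
  rwa [braidWord, braidWord, M.symmetric j i] at this

theorem eq_or_eq_of_mem_alternatingWord {B : Type*} {i j x : B} {k : ℕ}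
    (h : x ∈ alternatingWord i j k) : x = i ∨ x = j := by
  induction k generalizing i j with
  | zero => simp [alternatingWord] at h
  | succ k ih =>
    rw [alternatingWord_succ, List.concat_eq_append, List.mem_append, List.mem_singleton] at h
    exact h.elim (fun h ↦ (ih h).symm) Or.inr

section Commutation

variable {B : Type*} {M : CoxeterMatrix B} {l l' : List B}

theorem CommStep.append_right (h : CommStep M l l') (x : List B) :
    CommStep M (l ++ x) (l' ++ x) := by
  obtain ⟨u, v, a, b, hab, rfl, rfl⟩ := h
  exact ⟨u, v ++ x, a, b, hab, by simp, by simp⟩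

theorem CommEquiv.append_right (h : CommEquiv M l l') (x : List B) :
    CommEquiv M (l ++ x) (l' ++ x) :=
  h.lift (· ++ x) fun _ _ ↦ Or.imp (·.append_right x) (·.append_right x)

theorem CommStep.filter_eq [DecidableEq B] {i j : B} (hij : M i j ≠ 2) (h : CommStep M l l') :
    l.filter (fun x ↦ x = i ∨ x = j) = l'.filter (fun x ↦ x = i ∨ x = j) := by
  obtain ⟨u, v, a, b, hab, rfl, rfl⟩ := h
  have hne : a ≠ b := by
    rintro rfl
    simp at hab
  have hnot : ¬ ((a = i ∨ a = j) ∧ (b = i ∨ b = j)) := by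
    have := M.symmetric i j
    grind
  grind

theorem CommEquiv.filter_eq [DecidableEq B] {i j : B} (hij : M i j ≠ 2) (h : CommEquiv M l l') :
    l.filter (fun x ↦ x = i ∨ x = j) = l'.filter (fun x ↦ x = i ∨ x = j) := by
  induction h with
  | refl => rfl
  | tail _ h ih => exact ih.trans (h.elim (·.filter_eq hij) (·.filter_eq hij |>.symm))

theorem not_commEquiv_alternatingWord {i j : B} (hij : 3 ≤ M i j) (u v : List B) :
    ¬ CommEquiv M (u ++ alternatingWord i j (M i j) ++ v)
      (u ++ alternatingWord j i (M i j) ++ v) := by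
  classical
  intro h
  have hfilter := h.filter_eq (i := i) (j := j) (by lia)
  have hself : (alternatingWord i j (M i j)).filter (fun x ↦ x = i ∨ x = j) =
      alternatingWord i j (M i j) :=
    List.filter_eq_self.2 fun x hx ↦ decide_eq_true (eq_or_eq_of_mem_alternatingWord hx)
  have hself' : (alternatingWord j i (M i j)).filter (fun x ↦ x = i ∨ x = j) =
      alternatingWord j i (M i j) :=
    List.filter_eq_self.2 fun x hx ↦ decide_eq_true (eq_or_eq_of_mem_alternatingWord hx).symm
  simp only [List.filter_append, hself, hself', List.append_cancel_right_eq,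
    List.append_cancel_left_eq] at hfilter
  obtain ⟨m, hm⟩ := Nat.exists_eq_add_of_le' (Nat.one_le_of_lt hij)
  rw [hm, alternatingWord_succ, alternatingWord_succ, List.concat_inj] at hfilter
  obtain ⟨-, rfl⟩ := hfilter
  simp at hij

end Commutation

section FullCommutativity

variable {B W : Type*} [Group W] {M : CoxeterMatrix B} {cs : CoxeterSystem M W} {w : W} {i j : B}

/-- The subword condition of the theorem: no reduced word of `w` contains a contiguous alternating
word in two letters `a`, `b` of length `m(a,b) ≥ 3`. -/
def AvoidsLongBraids (cs : CoxeterSystem M W) (w : W) : Prop :=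
  ∀ l, cs.IsReduced l → cs.wordProd l = w →
    ¬ ∃ (u v : List B) (a b : B), 3 ≤ M a b ∧ l = u ++ alternatingWord a b (M a b) ++ v

theorem FullyCommutative.avoidsLongBraids (h : FullyCommutative cs w) :
    AvoidsLongBraids cs w := by
  rintro _ hl hw ⟨u, v, a, b, hab, rfl⟩
  have hprod : cs.wordProd (u ++ alternatingWord b a (M a b) ++ v) =
      cs.wordProd (u ++ alternatingWord a b (M a b) ++ v) := by
    simp only [wordProd_append, wordProd_alternatingWord_comm cs a b]
  have hred := isReduced_of_wordProd_eq hl hprod (by simp)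
  exact not_commEquiv_alternatingWord hab u v (h _ _ hl hw hred (hprod.trans hw))

theorem AvoidsLongBraids.mul_simple (h : AvoidsLongBraids cs w) (hi : cs.IsRightDescent w i) :
    AvoidsLongBraids cs (w * cs.simple i) := by
  rintro l hl hw ⟨u, v, a, b, hab, rfl⟩
  refine h _ (isReduced_append_singleton_of_isRightDescent hi hl hw) ?_
    ⟨u, v ++ [i], a, b, hab, by simp⟩
  rw [wordProd_append, wordProd_singleton, hw, simple_mul_simple_cancel_right]

theorem AvoidsLongBraids.eq_two_of_isRightDescent (h : AvoidsLongBraids cs w) (hij : i ≠ j)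
    (hi : cs.IsRightDescent w i) (hj : cs.IsRightDescent w j) : M i j = 2 := by
  have h0 : M i j ≠ 0 := by
    intro h0
    obtain ⟨ω, hω, hw⟩ := exists_isReduced_append_alternatingWord hi hj
      (k := cs.length w + 1) (.inl h0)
    have := hω.eq
    rw [hw, List.length_append, length_alternatingWord] at this
    lia
  have h1 := M.off_diagonal i j hij
  by_contra h2
  obtain ⟨ω, hω, hw⟩ := exists_isReduced_append_alternatingWord hi hj (.inr le_rfl)
  exact h _ hω hw ⟨ω, [], i, j, by lia, by simp⟩

theorem FullyCommutative.commEquiv_append_singleton (h : FullyCommutative cs (w * cs.simple i))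
    {x y : List B} (hx : cs.IsReduced (x ++ [i])) (hxw : cs.wordProd (x ++ [i]) = w)
    (hy : cs.IsReduced (y ++ [i])) (hyw : cs.wordProd (y ++ [i]) = w) :
    CommEquiv M (x ++ [i]) (y ++ [i]) := by
  have hprefix {z : List B} (hz : cs.IsReduced (z ++ [i])) (hzw : cs.wordProd (z ++ [i]) = w) :
      cs.IsReduced z ∧ cs.wordProd z = w * cs.simple i := by
    refine ⟨by simpa using hz.take z.length, ?_⟩
    rw [← hzw, wordProd_append, wordProd_singleton, simple_mul_simple_cancel_right]
  obtain ⟨hx, hxw⟩ := hprefix hx hxw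
  obtain ⟨hy, hyw⟩ := hprefix hy hyw
  exact (h x y hx hxw hy hyw).append_right [i]

theorem exists_isReduced_append_pair (hij : M i j = 2) (hi : cs.IsRightDescent w i)
    (hj : cs.IsRightDescent w j) :
    ∃ ω, (cs.IsReduced (ω ++ [i] ++ [j]) ∧ cs.wordProd (ω ++ [i] ++ [j]) = w) ∧
      cs.IsReduced (ω ++ [j] ++ [i]) ∧ cs.wordProd (ω ++ [j] ++ [i]) = w := by
  obtain ⟨ω, hω, hw⟩ := exists_isReduced_append_alternatingWord hi hj (.inr hij.ge)
  have halt (a b : B) : ω ++ [a] ++ [b] = ω ++ alternatingWord a b 2 := by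
    simp [alternatingWord]
  have hprod : cs.wordProd (ω ++ alternatingWord j i 2) =
      cs.wordProd (ω ++ alternatingWord i j 2) := by
    rw [wordProd_append, wordProd_append, ← hij, wordProd_alternatingWord_comm]
  refine ⟨ω, ?_⟩
  rw [halt, halt]
  exact ⟨⟨hω, hw⟩, isReduced_of_wordProd_eq hω hprod (by simp), hprod.trans hw⟩

theorem AvoidsLongBraids.fullyCommutative (h : AvoidsLongBraids cs w) :
    FullyCommutative cs w := by
  induction hn : cs.length w using Nat.strong_induction_on generalizing w with
  | h n ih =>
  have hlast {i : B} (hi : cs.IsRightDescent w i) : FullyCommutative cs (w * cs.simple i) :=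
    ih _ (hn ▸ hi) (h.mul_simple hi) rfl
  intro l l' hl hw hl' hw'
  have hlen : l.length = l'.length := by rw [← hl.eq, ← hl'.eq, hw, hw']
  obtain rfl | ⟨x, i, rfl⟩ := l.eq_nil_or_concat' <;>
    obtain rfl | ⟨y, j, rfl⟩ := l'.eq_nil_or_concat'
  · exact .refl
  · simp at hlen
  · simp at hlen
  have hi := hw ▸ isRightDescent_of_isReduced_append_singleton hl
  have hj := hw' ▸ isRightDescent_of_isReduced_append_singleton hl'
  obtain rfl | hij := eq_or_ne i j
  · exact (hlast hi).commEquiv_append_singleton hl hw hl' hw'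
  have hm := h.eq_two_of_isRightDescent hij hi hj
  obtain ⟨ω, ⟨hωij, hwij⟩, hωji, hwji⟩ := exists_isReduced_append_pair hm hi hj
  have hswap : CommEquiv M (ω ++ [j] ++ [i]) (ω ++ [i] ++ [j]) :=
    .single (.inr ⟨ω, [], i, j, hm, by simp, by simp⟩)
  exact ((hlast hi).commEquiv_append_singleton hl hw hωji hwji).trans
    (hswap.trans ((hlast hj).commEquiv_append_singleton hωij hwij hl' hw'))

end FullCommutativity

/-- `w` is fully commutative iff no reduced word of `w` contains a contiguous
alternating subword `sts⋯` of length `m(s,t)` with `m(s,t) ≥ 3`. -/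
theorem stmt2 {B W : Type*} [Group W] {M : CoxeterMatrix B} (cs : CoxeterSystem M W) (w : W) :
    FullyCommutative cs w ↔
      ∀ l, cs.IsReduced l → cs.wordProd l = w →
        ¬ ∃ (u v : List B) (a b : B), 3 ≤ M a b ∧
          l = u ++ alternatingWord a b (M a b) ++ v :=
  ⟨FullyCommutative.avoidsLongBraids, AvoidsLongBraids.fullyCommutative⟩
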